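/- arXiv:1712.06441 — 3 statements merged into one kernel-verified Lean document; each statement's English description precedes it below -/
import Mathlib

section
/- Let W be a real vector space, let a and a_h be symmetric bilinear forms on W satisfying a(v,v) ≥ 0 and 0 ≤ a_h(v,v) ≤ α^*·a(v,v) for all v ∈ W (with α^* > 0), and let P ⊆ W satisfy a_h(p, v) = a(p, v) for all p ∈ P and all v ∈ W. Then for every w ∈ W and every p ∈ P, |a_h(w, w) − a(w, w)| ≤ (1 + α^*)·a(w − p, w − p). -/
/-- quantitative consistency bound
`|a_h w w − a w w| ≤ (1 + α^*) * a (w−p) (w−p)` for any `p` in the consistency set `P`. -/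
theorem stmt_9
    {W : Type*} [AddCommGroup W] [Module ℝ W]
    (a a_h : LinearMap.BilinForm ℝ W)
    (ha_symm : ∀ u v : W, a u v = a v u)
    (hah_symm : ∀ u v : W, a_h u v = a_h v u)
    (α_star : ℝ) (hα_star : 0 < α_star)
    (ha_nonneg : ∀ v : W, 0 ≤ a v v)
    (hstab : ∀ v : W, 0 ≤ a_h v v ∧ a_h v v ≤ α_star * a v v)
    (P : Set W)
    (hconsist : ∀ p ∈ P, ∀ v : W, a_h p v = a p v) :
    ∀ w : W, ∀ p ∈ P,
      |a_h w w - a w w| ≤ (1 + α_star) * a (w - p) (w - p) := by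
  intro w p hp
  have key : a_h w w - a w w = a_h (w - p) (w - p) - a (w - p) (w - p) := by
    have h1 := hconsist p hp w
    have h2 := hconsist p hp p
    have h3 := hah_symm w p
    have h4 := ha_symm w p
    simp only [map_sub, LinearMap.sub_apply]
    linarith
  obtain ⟨h5, h6⟩ := hstab (w - p)
  have h7 := ha_nonneg (w - p)
  have h8 := mul_nonneg hα_star.le h7
  rw [key, abs_le]
  constructor <;> linarith
end

section
/- Let V be a real vector space, V_h ⊆ V a subspace, a and b symmetric bilinear forms on V, and a_h and b_h symmetric bilinear forms on V_h. Suppose w ∈ V and λ ∈ ℝ satisfy a(w, v) = λ·b(w, v) for all v ∈ V, and w_h ∈ V_h and λ_h ∈ ℝ satisfy a_h(w_h, v) = λ_h·b_h(w_h, v) for all v ∈ V_h. Then (λ_h − λ)·b(w_h, w_h) = a(w − w_h, w − w_h) − λ·b(w − w_h, w − w_h) + a_h(w_h, w_h) − a(w_h, w_h) + λ_h·[b(w_h, w_h) − b_h(w_h, w_h)]. -/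
/-- the algebraic eigenvalue-error identity (4.5) of the paper:
`(λ_h − λ)·b(w_h, w_h) = a(w − w_h, w − w_h) − λ·b(w − w_h, w − w_h)
  + a_h(w_h, w_h) − a(w_h, w_h) + λ_h·[b(w_h, w_h) − b_h(w_h, w_h)]`. -/
theorem stmt_10
    {V : Type*} [AddCommGroup V] [Module ℝ V]
    (V_h : Submodule ℝ V)
    (a b : LinearMap.BilinForm ℝ V)
    (ha_symm : ∀ u v : V, a u v = a v u)
    (hb_symm : ∀ u v : V, b u v = b v u)
    (a_h b_h : LinearMap.BilinForm ℝ V_h)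
    (hah_symm : ∀ u v : V_h, a_h u v = a_h v u)
    (hbh_symm : ∀ u v : V_h, b_h u v = b_h v u)
    (w : V) (lam : ℝ) (hw : ∀ v : V, a w v = lam * b w v)
    (w_h : V_h) (lam_h : ℝ) (hw_h : ∀ v : V_h, a_h w_h v = lam_h * b_h w_h v) :
    (lam_h - lam) * b (w_h : V) (w_h : V) =
      a (w - (w_h : V)) (w - (w_h : V)) - lam * b (w - (w_h : V)) (w - (w_h : V))
        + (a_h w_h w_h - a (w_h : V) (w_h : V))
        + lam_h * (b (w_h : V) (w_h : V) - b_h w_h w_h) := by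
  simp only [map_sub, LinearMap.sub_apply]
  rw [ha_symm (w_h : V) w, hb_symm (w_h : V) w, hw w, hw (w_h : V), hw_h w_h]
  ring
end

section
/- Let V be a real normed space, V_h ⊆ V a subspace, a and b symmetric bilinear forms on V with |a(u,v)| ≤ M_a·‖u‖·‖v‖ and |b(u,v)| ≤ M_b·‖u‖·‖v‖ for all u, v ∈ V, and a_h, b_h symmetric bilinear forms on V_h. Suppose w ∈ V and λ ∈ ℝ satisfy a(w, v) = λ·b(w, v) for all v ∈ V, and w_h ∈ V_h and λ_h ∈ ℝ satisfy a_h(w_h, v) = λ_h·b_h(w_h, v) for all v ∈ V_h, and assume b(w_h, w_h) ≥ c > 0. Then |λ − λ_h| ≤ (1/c)·[(M_a + |λ|·M_b)·‖w − w_h‖² + |a_h(w_h, w_h) − a(w_h, w_h)| + |λ_h|·|b(w_h, w_h) − b_h(w_h, w_h)|]. -/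
/-- the quantitative eigenvalue error bound (4.10) of the paper:
`|λ − λ_h| ≤ (1/c)·[(M_a + |λ|·M_b)·‖w − w_h‖² + |a_h(w_h,w_h) − a(w_h,w_h)|
  + |λ_h|·|b(w_h,w_h) − b_h(w_h,w_h)|]`. -/
theorem stmt_12
    {V : Type*} [NormedAddCommGroup V] [NormedSpace ℝ V]
    (V_h : Submodule ℝ V)
    (a b : LinearMap.BilinForm ℝ V) (M_a M_b : ℝ)
    (ha_symm : ∀ u v : V, a u v = a v u)
    (hb_symm : ∀ u v : V, b u v = b v u)
    (ha_bdd : ∀ u v : V, |a u v| ≤ M_a * ‖u‖ * ‖v‖)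
    (hb_bdd : ∀ u v : V, |b u v| ≤ M_b * ‖u‖ * ‖v‖)
    (a_h b_h : LinearMap.BilinForm ℝ V_h)
    (hah_symm : ∀ u v : V_h, a_h u v = a_h v u)
    (hbh_symm : ∀ u v : V_h, b_h u v = b_h v u)
    (w : V) (lam : ℝ) (hw : ∀ v : V, a w v = lam * b w v)
    (w_h : V_h) (lam_h : ℝ) (hw_h : ∀ v : V_h, a_h w_h v = lam_h * b_h w_h v)
    (c : ℝ) (hc : 0 < c) (hbwh : c ≤ b (w_h : V) (w_h : V)) :
    |lam - lam_h| ≤ (1 / c) *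
      ((M_a + |lam| * M_b) * ‖w - (w_h : V)‖ ^ 2
        + |a_h w_h w_h - a (w_h : V) (w_h : V)|
        + |lam_h| * |b (w_h : V) (w_h : V) - b_h w_h w_h|) := by
  have key : (lam_h - lam) * b (w_h : V) (w_h : V)
      = a (w - w_h) (w - w_h) - lam * b (w - w_h) (w - w_h)
        + (a_h w_h w_h - a (w_h : V) (w_h : V))
        + lam_h * (b (w_h : V) (w_h : V) - b_h w_h w_h) := by
    have h1 := hw w
    have h2 := hw w_h
    have h3 := ha_symm w_h w
    have h4 := hb_symm w_h w
    have h5 := hw_h w_h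
    simp only [map_sub, LinearMap.sub_apply]
    rw [h3, h4, h1, h2, h5]
    ring
  have hA := ha_bdd (w - w_h) (w - w_h)
  have hB := mul_le_mul_of_nonneg_left (hb_bdd (w - w_h) (w - w_h)) (abs_nonneg lam)
  rw [← abs_mul] at hB
  have habs : |lam - lam_h| * b (w_h : V) (w_h : V) =
      |(lam_h - lam) * b (w_h : V) (w_h : V)| := by
    rw [abs_mul, abs_of_pos (lt_of_lt_of_le hc hbwh), abs_sub_comm]
  have h1 := mul_le_mul_of_nonneg_left hbwh (abs_nonneg (lam - lam_h))
  rw [habs, key] at h1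
  rw [one_div, inv_mul_eq_div, le_div_iff₀ hc]
  rw [← abs_mul]
  refine h1.trans ((abs_add_le _ _).trans ?_)
  gcongr
  refine (abs_add_le _ _).trans ?_
  gcongr
  refine (abs_sub _ _).trans ?_
  linarith [hA, hB]
end
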